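/- Let β > 1/2 and let X be a random variable distributed on ℝ with the Cauchy-type density f_β(x) = C_β/(1+x²)^β, where C_β > 0 is the constant making f_β a probability density. Then for every smooth function φ on ℝ such that φ(X) has finite variance, Var[φ(X)] ≤ (1/ρ(β)) E[(1+X²) (φ'(X))²], where ρ(β) = (β − 1/2)² for 1/2 < β ≤ 3/2 and ρ(β) = 2(β − 1) for β > 3/2. -/

import Mathlib

open MeasureTheory Set

/-!
Comparing with `φ 0` instead of the mean, it suffices to bound `ρ(β) ∫ ψ² f` by `∫ p ψ'²` for
`p = (1 + x²) f`, `f = f_β` and `ψ = φ - φ 0`. By evenness this is a Hardy inequality on each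
half-line. If `(p u')' + ρ f u ≤ 0` for some `u > 0`, then `V = p u' / u` satisfies
`V' + V² / p + ρ f ≤ 0`, and completing the square gives `(V ψ²)' ≤ p ψ'² - ρ f ψ²`. Integrating
proves the inequality, because `V ψ²` vanishes at `0` and is nonnegative afterwards.

The trial function is `u = x (1 + x²) ^ ((t - 1) / 2)` with `0 < t ≤ 1`, and it yields
`ρ = t (2β - 1 - t)`. For `t = 1` it is the eigenfunction `u = x`, while for `t = β - 1/2` it has
the critical growth `x ^ (β - 1/2)` at infinity.
-/

open Filter Asymptotics
open scoped Topology

/-- `V` satisfies the Riccati inequality `V' + V² / p + q ≤ 0` on `s`. For `V = p u' / u` with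
`u > 0` this says that `u` is a supersolution of the Sturm–Liouville equation
`(p u')' + q u = 0`. -/
structure IsRiccatiSubsolution (p q V : ℝ → ℝ) (s : Set ℝ) : Prop where
  differentiableAt : ∀ x ∈ s, DifferentiableAt ℝ V x
  deriv_add_le : ∀ x ∈ s, deriv V x + V x ^ 2 / p x + q x ≤ 0

namespace IsRiccatiSubsolution

variable {p q V ψ ψ' : ℝ → ℝ} {s : Set ℝ} {a b x : ℝ}

lemma mono {t : Set ℝ} (hV : IsRiccatiSubsolution p q V t) (hst : s ⊆ t) :
    IsRiccatiSubsolution p q V s :=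
  ⟨fun x hx => hV.differentiableAt x (hst hx), fun x hx => hV.deriv_add_le x (hst hx)⟩

lemma deriv_mul_sq_add_le (hV : IsRiccatiSubsolution p q V s) (hx : x ∈ s) (hp : 0 < p x)
    (y d : ℝ) : deriv V x * y ^ 2 + V x * (2 * y * d) ≤ p x * d ^ 2 - q x * y ^ 2 := by
  have hsq : p x * d ^ 2 - q x * y ^ 2 - (deriv V x * y ^ 2 + V x * (2 * y * d)) =
      p x * (d - V x / p x * y) ^ 2 - (deriv V x + V x ^ 2 / p x + q x) * y ^ 2 := by
    field_simp
    ring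
  have hriccati := mul_nonpos_of_nonpos_of_nonneg (hV.deriv_add_le x hx) (sq_nonneg y)
  have hsq_nonneg : 0 ≤ p x * (d - V x / p x * y) ^ 2 := by positivity
  linarith

lemma intervalIntegral_mul_sq_le (hV : IsRiccatiSubsolution p q V (Ioo a b)) (hab : a ≤ b)
    (hp : ∀ x ∈ Ioo a b, 0 < p x) (hψ : ∀ x ∈ Ioo a b, HasDerivAt ψ (ψ' x) x) (hψa : ψ a = 0)
    (hVb : 0 ≤ V b) (hcont : ContinuousOn (fun x => V x * ψ x ^ 2) (Icc a b))
    (hqψ : IntervalIntegrable (fun x => q x * ψ x ^ 2) volume a b)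
    (hpψ' : IntervalIntegrable (fun x => p x * ψ' x ^ 2) volume a b) :
    ∫ x in a..b, q x * ψ x ^ 2 ≤ ∫ x in a..b, p x * ψ' x ^ 2 := by
  have hderiv (x) (hx : x ∈ Ioo a b) : HasDerivAt (fun x => V x * ψ x ^ 2)
      (deriv V x * ψ x ^ 2 + V x * (2 * ψ x * ψ' x)) x := by
    simpa using (hV.differentiableAt x hx).hasDerivAt.fun_mul ((hψ x hx).fun_pow 2)
  have hFTC : V b * ψ b ^ 2 - V a * ψ a ^ 2 ≤
      ∫ x in a..b, (p x * ψ' x ^ 2 - q x * ψ x ^ 2) :=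
    intervalIntegral.sub_le_integral_of_hasDeriv_right_of_le hab hcont
      (fun x hx => (hderiv x hx).hasDerivWithinAt)
      ((intervalIntegrable_iff_integrableOn_Icc_of_le hab).1 (hpψ'.sub hqψ))
      fun x hx => hV.deriv_mul_sq_add_le hx (hp x hx) _ _
  rw [intervalIntegral.integral_sub hpψ' hqψ, hψa] at hFTC
  have hb : 0 ≤ V b * ψ b ^ 2 := by positivity
  linarith

lemma integrableOn_Ioi_mul_sq_and_integral_le (hV : IsRiccatiSubsolution p q V (Ioi a))
    (hp : ∀ x ∈ Ioi a, 0 < p x) (hq : ∀ x ∈ Ioi a, 0 ≤ q x) (hV₀ : ∀ x ∈ Ioi a, 0 ≤ V x)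
    (hψ : ∀ x ∈ Ioi a, HasDerivAt ψ (ψ' x) x) (hψa : ψ a = 0)
    (hcont : ContinuousOn (fun x => V x * ψ x ^ 2) (Ici a))
    (hqψ : ContinuousOn (fun x => q x * ψ x ^ 2) (Ici a))
    (hpψ' : IntegrableOn (fun x => p x * ψ' x ^ 2) (Ioi a)) :
    IntegrableOn (fun x => q x * ψ x ^ 2) (Ioi a) ∧
      ∫ x in Ioi a, q x * ψ x ^ 2 ≤ ∫ x in Ioi a, p x * ψ' x ^ 2 := by
  have hqψ_int (b) (hb : a < b) : IntervalIntegrable (fun x => q x * ψ x ^ 2) volume a b :=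
    (hqψ.mono Icc_subset_Ici_self).intervalIntegrable_of_Icc hb.le
  have hle (b) (hb : a < b) : ∫ x in a..b, q x * ψ x ^ 2 ≤ ∫ x in a..b, p x * ψ' x ^ 2 :=
    (hV.mono Ioo_subset_Ioi_self).intervalIntegral_mul_sq_le hb.le (fun x hx => hp x hx.1)
      (fun x hx => hψ x hx.1) hψa (hV₀ b hb) (hcont.mono Icc_subset_Ici_self) (hqψ_int b hb)
      ((intervalIntegrable_iff_integrableOn_Ioc_of_le hb.le).2
        (hpψ'.mono_set Ioc_subset_Ioi_self))
  have hbound (b) (hb : a < b) :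
      ∫ x in a..b, ‖q x * ψ x ^ 2‖ ≤ ∫ x in Ioi a, p x * ψ' x ^ 2 := calc
    ∫ x in a..b, ‖q x * ψ x ^ 2‖ = ∫ x in a..b, q x * ψ x ^ 2 :=
      intervalIntegral.integral_congr_Ioo_of_le hb.le fun x hx =>
        Real.norm_of_nonneg (mul_nonneg (hq x hx.1) (sq_nonneg _))
    _ ≤ ∫ x in Ioc a b, p x * ψ' x ^ 2 := by
      rw [← intervalIntegral.integral_of_le hb.le]
      exact hle b hb
    _ ≤ ∫ x in Ioi a, p x * ψ' x ^ 2 :=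
      setIntegral_mono_set hpψ' ((ae_restrict_mem measurableSet_Ioi).mono fun x hx =>
        mul_nonneg (hp x hx).le (sq_nonneg _)) Ioc_subset_Ioi_self.eventuallyLE
  have hint : IntegrableOn (fun x => q x * ψ x ^ 2) (Ioi a) :=
    integrableOn_Ioi_of_intervalIntegral_norm_bounded _ a
      (fun b => ((hqψ.mono Icc_subset_Ici_self).integrableOn_Icc).mono_set Ioc_subset_Icc_self)
      tendsto_id ((eventually_gt_atTop a).mono hbound)
  exact ⟨hint, le_of_tendsto_of_tendsto (intervalIntegral_tendsto_integral_Ioi a hint tendsto_id)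
    (intervalIntegral_tendsto_integral_Ioi a hpψ' tendsto_id)
    ((eventually_gt_atTop a).mono hle)⟩

end IsRiccatiSubsolution

lemma continuousOn_Ici_mul_sq_of_isBigO_inv {V ψ : ℝ → ℝ} {a : ℝ}
    (hV : ContinuousOn V (Ioi a)) (hVO : V =O[𝓝[>] a] fun x => (x - a)⁻¹)
    (hψ : ContinuousOn ψ (Ioi a)) (hψa : ψ a = 0) (hψd : DifferentiableAt ℝ ψ a) :
    ContinuousOn (fun x => V x * ψ x ^ 2) (Ici a) := by
  have hψO : ψ =O[𝓝[>] a] fun x => x - a := by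
    simpa [hψa] using hψd.isBigO_sub.mono nhdsWithin_le_nhds
  have hlim : Tendsto (fun x => (x - a)⁻¹ * (x - a) ^ 2) (𝓝[>] a) (𝓝 0) := by
    have hsub : Tendsto (fun x => x - a) (𝓝[>] a) (𝓝 (a - a)) :=
      (continuous_id.sub continuous_const).continuousWithinAt
    refine (sub_self a ▸ hsub).congr' ?_
    filter_upwards [self_mem_nhdsWithin] with x hx
    have hxa : x - a ≠ 0 := sub_ne_zero.2 (mem_Ioi.1 hx).ne'
    field_simp
  intro x hx
  rcases (mem_Ici.1 hx).eq_or_lt with rfl | hx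
  · rw [← continuousWithinAt_Ioi_iff_Ici, ContinuousWithinAt, hψa]
    simpa using (hVO.mul (hψO.pow 2)).trans_tendsto hlim
  · exact ((hV.mul (hψ.pow 2)).continuousAt (Ioi_mem_nhds hx)).continuousWithinAt

section Reflection

variable {E : Type*} [NormedAddCommGroup E] {f : ℝ → E}

lemma integrable_of_integrableOn_Ioi_comp_neg (hpos : IntegrableOn f (Ioi 0))
    (hneg : IntegrableOn (fun x => f (-x)) (Ioi 0)) : Integrable f := by
  have hIio : IntegrableOn (fun x => f (- -x)) (Iio 0) :=
    IntegrableOn.comp_neg_Iio (f := fun x => f (-x)) (by simpa only [neg_zero] using hneg)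
  simp only [neg_neg] at hIio
  rw [← integrableOn_univ, ← Iio_union_Ici (a := (0 : ℝ)), integrableOn_union,
    integrableOn_Ici_iff_integrableOn_Ioi]
  exact ⟨hIio, hpos⟩

lemma integral_eq_integral_Ioi_add_integral_Ioi_comp_neg [NormedSpace ℝ E] (hf : Integrable f) :
    ∫ x, f x = (∫ x in Ioi 0, f x) + ∫ x in Ioi 0, f (-x) := by
  rw [integral_comp_neg_Ioi, neg_zero, add_comm,
    intervalIntegral.integral_Iic_add_Ioi hf.integrableOn hf.integrableOn]

end Reflection

theorem IsRiccatiSubsolution.integrable_mul_sq_and_integral_le_of_even {p q V ψ : ℝ → ℝ}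
    (hV : IsRiccatiSubsolution p q V (Ioi 0)) (hp : ∀ x ∈ Ioi 0, 0 < p x)
    (hq : ∀ x ∈ Ioi 0, 0 ≤ q x) (hV₀ : ∀ x ∈ Ioi 0, 0 ≤ V x) (hVO : V =O[𝓝[>] 0] fun x => x⁻¹)
    (hp_even : p.Even) (hq_even : q.Even) (hq_cont : Continuous q)
    (hψ : Differentiable ℝ ψ) (hψ0 : ψ 0 = 0) (hpψ' : Integrable fun x => p x * deriv ψ x ^ 2) :
    Integrable (fun x => q x * ψ x ^ 2) ∧
      ∫ x, q x * ψ x ^ 2 ≤ ∫ x, p x * deriv ψ x ^ 2 := by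
  have half_line {χ : ℝ → ℝ} (hχ : Differentiable ℝ χ) (hχ0 : χ 0 = 0)
      (hpχ' : IntegrableOn (fun x => p x * deriv χ x ^ 2) (Ioi 0)) :=
    hV.integrableOn_Ioi_mul_sq_and_integral_le hp hq hV₀ (fun x _ => (hχ x).hasDerivAt) hχ0
      (continuousOn_Ici_mul_sq_of_isBigO_inv
        (fun x hx => (hV.differentiableAt x hx).continuousAt.continuousWithinAt)
        (by simpa only [sub_zero] using hVO) hχ.continuous.continuousOn hχ0 (hχ 0))
      (hq_cont.mul (hχ.continuous.pow 2)).continuousOn hpχ'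
  have hneg (x) : p (-x) * deriv ψ (-x) ^ 2 = p x * deriv (fun y => ψ (-y)) x ^ 2 := by
    rw [hp_even, deriv_comp_neg, neg_sq]
  have hpψ'_neg : IntegrableOn (fun x => p x * deriv (fun y => ψ (-y)) x ^ 2) (Ioi 0) := by
    simpa only [hneg] using hpψ'.comp_neg.integrableOn
  obtain ⟨hint_right, hle_right⟩ := half_line hψ hψ0 hpψ'.integrableOn
  obtain ⟨hint_left, hle_left⟩ := half_line (χ := fun x => ψ (-x))
    (hψ.comp differentiable_neg) (by simpa) hpψ'_neg
  have hint : Integrable fun x => q x * ψ x ^ 2 :=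
    integrable_of_integrableOn_Ioi_comp_neg hint_right (by simpa only [hq_even _] using hint_left)
  refine ⟨hint, ?_⟩
  rw [integral_eq_integral_Ioi_add_integral_Ioi_comp_neg hint,
    integral_eq_integral_Ioi_add_integral_Ioi_comp_neg hpψ']
  simp only [hq_even _, hneg]
  exact add_le_add hle_right hle_left

section Variance

variable {α : Type*} [MeasurableSpace α] {μ : Measure α} {f φ : α → ℝ}

lemma integrable_mul_of_integrable_sq_mul (hf₀ : ∀ x, 0 ≤ f x) (hf : Integrable f μ)
    (hφ : AEStronglyMeasurable φ μ) (hφf : Integrable (fun x => φ x ^ 2 * f x) μ) :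
    Integrable (fun x => φ x * f x) μ := by
  refine (hφf.add hf).mono' (hφ.mul hf.aestronglyMeasurable) (.of_forall fun x => ?_)
  have habs : |φ x| ≤ φ x ^ 2 + 1 := by nlinarith [sq_abs (φ x), sq_nonneg (|φ x| - 1)]
  calc ‖φ x * f x‖ = |φ x| * f x := by rw [norm_mul, Real.norm_eq_abs, Real.norm_of_nonneg (hf₀ x)]
    _ ≤ (φ x ^ 2 + 1) * f x := mul_le_mul_of_nonneg_right habs (hf₀ x)
    _ = φ x ^ 2 * f x + f x := by ring

lemma integrable_sq_mul_and_variance_le_integral_sub_sq_mul (hf₀ : ∀ x, 0 ≤ f x)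
    (hf₁ : ∫ x, f x ∂μ = 1) (hφ : AEStronglyMeasurable φ μ) (c : ℝ)
    (hφf : Integrable (fun x => (φ x - c) ^ 2 * f x) μ) :
    Integrable (fun x => φ x ^ 2 * f x) μ ∧
      (∫ x, φ x ^ 2 * f x ∂μ) - (∫ x, φ x * f x ∂μ) ^ 2 ≤ ∫ x, (φ x - c) ^ 2 * f x ∂μ := by
  have hf : Integrable f μ := .of_integral_ne_zero (by simp [hf₁])
  have hψf : Integrable (fun x => (φ x - c) * f x) μ :=
    integrable_mul_of_integrable_sq_mul hf₀ hf (hφ.sub aestronglyMeasurable_const) hφf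
  have hsq : (fun x => φ x ^ 2 * f x) =
      fun x => (φ x - c) ^ 2 * f x + (2 * c * ((φ x - c) * f x) + c ^ 2 * f x) := by
    ext x; ring
  have hlin : (fun x => φ x * f x) = fun x => (φ x - c) * f x + c * f x := by
    ext x; ring
  have hrest : Integrable (fun x => 2 * c * ((φ x - c) * f x) + c ^ 2 * f x) μ :=
    (hψf.const_mul _).add (hf.const_mul _)
  refine ⟨hsq ▸ hφf.add hrest, ?_⟩
  rw [hsq, hlin, integral_add hφf hrest, integral_add (hψf.const_mul _) (hf.const_mul _),
    integral_add hψf (hf.const_mul _)]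
  simp only [integral_const_mul, hf₁]
  nlinarith [sq_nonneg (∫ x, (φ x - c) * f x ∂μ)]

end Variance

/-- The Cauchy-type density `f_β` with an arbitrary constant `C` in place of `C_β`. -/
noncomputable def cauchyTypeDensity (C β x : ℝ) : ℝ := C / (1 + x ^ 2) ^ β

/-- The constant `ρ(β)` of the Chernoff inequality for the Cauchy-type density `f_β`. -/
noncomputable def cauchyTypeGap (β : ℝ) : ℝ :=
  if β ≤ 3 / 2 then (β - 1 / 2) ^ 2 else 2 * (β - 1)

/-- The Riccati function `V = p u' / u` for `p = (1 + x²) f_β` and the trial function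
`u = x (1 + x²) ^ ((t - 1) / 2)`. -/
noncomputable def cauchyTypeRiccati (C β t x : ℝ) : ℝ :=
  x⁻¹ * ((1 + t * x ^ 2) * cauchyTypeDensity C β x)

section CauchyType

variable {C β t x : ℝ} {φ : ℝ → ℝ}

lemma cauchyTypeDensity_pos (hC : 0 < C) (β x : ℝ) : 0 < cauchyTypeDensity C β x := by
  unfold cauchyTypeDensity
  positivity

lemma cauchyTypeDensity_even (C β : ℝ) : (cauchyTypeDensity C β).Even := fun x => by
  simp [cauchyTypeDensity]

lemma hasDerivAt_cauchyTypeDensity (C β x : ℝ) : HasDerivAt (cauchyTypeDensity C β)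
    (-2 * β * x / (1 + x ^ 2) * cauchyTypeDensity C β x) x := by
  have hx : 0 < 1 + x ^ 2 := by positivity
  have hbase : HasDerivAt (fun x : ℝ => 1 + x ^ 2) (2 * x) x := by
    simpa using (hasDerivAt_pow 2 x).const_add 1
  refine ((hbase.rpow_const (p := β) (.inl hx.ne')).fun_inv (by positivity)).const_mul C
    |>.congr_deriv ?_
  rw [cauchyTypeDensity, Real.rpow_sub_one hx.ne']
  field_simp

lemma continuous_cauchyTypeDensity (C β : ℝ) : Continuous (cauchyTypeDensity C β) :=
  continuous_iff_continuousAt.2 fun x => (hasDerivAt_cauchyTypeDensity C β x).continuousAt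

lemma hasDerivAt_cauchyTypeRiccati (C β t : ℝ) (hx : x ≠ 0) :
    HasDerivAt (cauchyTypeRiccati C β t)
      ((t - (x ^ 2)⁻¹ - 2 * β * (1 + t * x ^ 2) / (1 + x ^ 2)) * cauchyTypeDensity C β x) x := by
  have hpoly : HasDerivAt (fun x : ℝ => 1 + t * x ^ 2) (t * (2 * x)) x := by
    simpa using ((hasDerivAt_pow 2 x).const_mul t).const_add 1
  refine ((hasDerivAt_inv hx).fun_mul
    (hpoly.fun_mul (hasDerivAt_cauchyTypeDensity C β x))).congr_deriv ?_
  field_simp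
  ring

lemma cauchyTypeRiccati_nonneg (hC : 0 ≤ C) (ht : 0 ≤ t) (hx : 0 ≤ x) :
    0 ≤ cauchyTypeRiccati C β t x := by
  unfold cauchyTypeRiccati cauchyTypeDensity
  positivity

lemma isBigO_cauchyTypeRiccati (C β t : ℝ) :
    cauchyTypeRiccati C β t =O[𝓝[>] 0] fun x => x⁻¹ := by
  have hcont : Continuous fun x => (1 + t * x ^ 2) * cauchyTypeDensity C β x := by
    have := continuous_cauchyTypeDensity C β
    fun_prop
  have hone := ((hcont.tendsto 0).mono_left (nhdsWithin_le_nhds (s := Ioi 0))).isBigO_one ℝ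
  change (fun x => x⁻¹ * ((1 + t * x ^ 2) * cauchyTypeDensity C β x)) =O[𝓝[>] 0] _
  simpa only [mul_one] using (isBigO_refl (fun x : ℝ => x⁻¹) (𝓝[>] 0)).mul hone

lemma isRiccatiSubsolution_cauchyTypeRiccati (hC : 0 < C) (ht : t ≤ 1) (htβ : t ≤ 2 * β + 1) :
    IsRiccatiSubsolution (fun x => (1 + x ^ 2) * cauchyTypeDensity C β x)
      (fun x => t * (2 * β - 1 - t) * cauchyTypeDensity C β x) (cauchyTypeRiccati C β t)
      (Ioi 0) where
  differentiableAt x hx := (hasDerivAt_cauchyTypeRiccati C β t hx.ne').differentiableAt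
  deriv_add_le x hx := by
    have hf := cauchyTypeDensity_pos hC β x
    have hx : 0 < x := hx
    rw [(hasDerivAt_cauchyTypeRiccati C β t hx.ne').deriv, cauchyTypeRiccati]
    have hriccati : (t - (x ^ 2)⁻¹ - 2 * β * (1 + t * x ^ 2) / (1 + x ^ 2)) *
          cauchyTypeDensity C β x +
        (x⁻¹ * ((1 + t * x ^ 2) * cauchyTypeDensity C β x)) ^ 2 /
          ((1 + x ^ 2) * cauchyTypeDensity C β x) +
        t * (2 * β - 1 - t) * cauchyTypeDensity C β x =
        -((1 - t) * (2 * β + 1 - t) / (1 + x ^ 2) * cauchyTypeDensity C β x) := by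
      field_simp
      ring
    rw [hriccati, neg_nonpos]
    have hnum : 0 ≤ (1 - t) * (2 * β + 1 - t) :=
      mul_nonneg (sub_nonneg.2 ht) (sub_nonneg.2 htβ)
    exact mul_nonneg (div_nonneg hnum (by positivity)) hf.le

theorem integrable_sub_sq_mul_cauchyTypeDensity_and_integral_le (hC : 0 < C) (ht₀ : 0 < t)
    (ht₁ : t ≤ 1) (htβ : t < 2 * β - 1) (hφ : Differentiable ℝ φ)
    (hφ' : Integrable fun x => (1 + x ^ 2) * deriv φ x ^ 2 * cauchyTypeDensity C β x) :
    Integrable (fun x => (φ x - φ 0) ^ 2 * cauchyTypeDensity C β x) ∧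
      t * (2 * β - 1 - t) * ∫ x, (φ x - φ 0) ^ 2 * cauchyTypeDensity C β x ≤
        ∫ x, (1 + x ^ 2) * deriv φ x ^ 2 * cauchyTypeDensity C β x := by
  have hf := cauchyTypeDensity_pos hC β
  have hρ : 0 < t * (2 * β - 1 - t) := mul_pos ht₀ (sub_pos.2 htβ)
  have hV : IsRiccatiSubsolution (fun x => (1 + x ^ 2) * cauchyTypeDensity C β x)
      (fun x => t * (2 * β - 1 - t) * cauchyTypeDensity C β x) (cauchyTypeRiccati C β t) (Ioi 0) :=
    isRiccatiSubsolution_cauchyTypeRiccati hC ht₁ (by linarith)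
  have hmain := hV.integrable_mul_sq_and_integral_le_of_even (ψ := fun x => φ x - φ 0)
    (fun x _ => mul_pos (by positivity) (hf x)) (fun x _ => mul_nonneg hρ.le (hf x).le)
    (fun x hx => cauchyTypeRiccati_nonneg hC.le ht₀.le (mem_Ioi.1 hx).le)
    (isBigO_cauchyTypeRiccati C β t) (fun x => by simp [cauchyTypeDensity_even C β x])
    (fun x => by simp [cauchyTypeDensity_even C β x])
    ((continuous_cauchyTypeDensity C β).const_mul _) (hφ.sub_const _) (sub_self _)
  simp only [deriv_sub_const_fun, mul_right_comm _ (cauchyTypeDensity C β _)] at hmain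
  simpa only [mul_assoc _ (_ ^ 2) (cauchyTypeDensity C β _), integral_const_mul,
    integrable_const_mul_iff hρ.ne'.isUnit] using hmain hφ'

-- On `[0, 1]` the map `t ↦ t (2β - 1 - t)` is maximal at `t = min (β - 1/2) 1`.
lemma exists_mul_sub_eq_cauchyTypeGap (hβ : 1 / 2 < β) :
    ∃ t, 0 < t ∧ t ≤ 1 ∧ t < 2 * β - 1 ∧ t * (2 * β - 1 - t) = cauchyTypeGap β := by
  unfold cauchyTypeGap
  split_ifs with h
  · exact ⟨β - 1 / 2, by linarith, by linarith, by linarith, by ring⟩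
  · exact ⟨1, by norm_num, le_rfl, by linarith, by ring⟩

end CauchyType

theorem chernoff_cauchy_type_general {C β : ℝ} (hβ : 1 / 2 < β) (hC : 0 < C)
    (hnorm : ∫ x, cauchyTypeDensity C β x = 1) {φ : ℝ → ℝ} (hφ : Differentiable ℝ φ)
    (hrhs : Integrable fun x => (1 + x ^ 2) * deriv φ x ^ 2 * cauchyTypeDensity C β x) :
    Integrable (fun x => φ x ^ 2 * cauchyTypeDensity C β x) ∧
      (∫ x, φ x ^ 2 * cauchyTypeDensity C β x) - (∫ x, φ x * cauchyTypeDensity C β x) ^ 2 ≤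
        (1 / cauchyTypeGap β) *
          ∫ x, (1 + x ^ 2) * deriv φ x ^ 2 * cauchyTypeDensity C β x := by
  obtain ⟨t, ht₀, ht₁, htβ, hgap⟩ := exists_mul_sub_eq_cauchyTypeGap hβ
  have hgap_pos : 0 < cauchyTypeGap β := hgap ▸ mul_pos ht₀ (sub_pos.2 htβ)
  obtain ⟨hint, hle⟩ :=
    integrable_sub_sq_mul_cauchyTypeDensity_and_integral_le hC ht₀ ht₁ htβ hφ hrhs
  obtain ⟨hint_sq, hvariance⟩ := integrable_sq_mul_and_variance_le_integral_sub_sq_mul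
    (fun x => (cauchyTypeDensity_pos hC β x).le) hnorm hφ.continuous.aestronglyMeasurable (φ 0) hint
  refine ⟨hint_sq, hvariance.trans ?_⟩
  rwa [one_div_mul_eq_div, le_div_iff₀' hgap_pos, ← hgap]

/-- **Chernoff inequality for Cauchy-type densities** (Theorem 2.2).
Let `β > 1/2` and let `X` be a random variable on `ℝ` with the Cauchy-type density
`f_β(x) = C_β/(1+x²)^β` (`C_β > 0` the normalizing constant). Then for every smooth
`φ` such that `φ(X)` has finite variance,
`Var[φ(X)] ≤ (1/ρ(β)) E[(1+X²)(φ'(X))²]`, where `ρ(β) = (β−1/2)²` for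
`1/2 < β ≤ 3/2` and `ρ(β) = 2(β−1)` for `β > 3/2`
(whenever the right-hand side is finite). -/
theorem chernoff_cauchy_type
    (β : ℝ) (hβ : 1 / 2 < β)
    (C : ℝ) (hC : 0 < C)
    (hnorm : ∫ x : ℝ, C / (1 + x ^ 2) ^ β = 1)
    (φ : ℝ → ℝ) (hφ : ContDiff ℝ (⊤ : ℕ∞) φ)
    (hvar : Integrable (fun x => φ x ^ 2 * (C / (1 + x ^ 2) ^ β)))
    (hrhs : Integrable (fun x => (1 + x ^ 2) * (deriv φ x) ^ 2 * (C / (1 + x ^ 2) ^ β))) :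
    (∫ x : ℝ, φ x ^ 2 * (C / (1 + x ^ 2) ^ β))
        - (∫ x : ℝ, φ x * (C / (1 + x ^ 2) ^ β)) ^ 2
      ≤ (1 / (if β ≤ 3 / 2 then (β - 1 / 2) ^ 2 else 2 * (β - 1))) *
          ∫ x : ℝ, (1 + x ^ 2) * (deriv φ x) ^ 2 * (C / (1 + x ^ 2) ^ β) := by
  exact (chernoff_cauchy_type_general hβ hC hnorm (hφ.differentiable (by simp)) hrhs).2
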